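/- Let ρ : U → ℂ^× be a group homomorphism and p a non-negative integer. There exists a family (f_M), indexed by the p-element subsets M of {1,…,s+t}, of holomorphic functions f_M : D → ℂ, not all identically zero, satisfying f_M((a,b)·z) · ∏_{m∈M} σ_m(a) = ρ(a) · f_M(z) for all (a,b) ∈ Γ(K,U) and all z ∈ D, if and only if there exists a p-element subset M of {1,…,s+t} with ρ(u) = ∏_{m∈M} σ_m(u) for all u ∈ U. (This is the q = 0 case of Theorem 1.3: H^{p,0}(X(K,U), E_ρ) ≠ 0 if and only if ρ is a product of p of the embeddings restricted to U.) -/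

import Mathlib

/-!
A nonzero component `f = f_M` is invariant under translation by the image of `𝓞 K` in
`ℝˢ × ℂᵗ` (take `a = 1`), and such an `f` is constant on `D`. Comparing the two sides of the
transformation law for a nonzero constant gives `ρ = ∏_{m ∈ M} σ_m`; conversely, when `ρ` has this
form, the family with `f_M = 1` and all other components `0` works.

Constancy has two parts.

* `𝓞 K` is a cocompact lattice in `ℝˢ × ℂᵗ` (`exists_real_coords`). So on a complex line in a
  `ℂᵗ`-direction, every value of `f` is already attained on a fixed compact parallelotope;
  hence `f` is bounded on the line and constant by Liouville (`OT_eq_of_agree`).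
* `f` therefore is invariant under translation by the projection of `𝓞 K` to `ℝˢ`. Since `ℓ(U)`
  spans `ℝˢ`, there are units `uₙ ∈ U` with all real embeddings of size comparable to `exp (-n)`
  (`exists_small_units`). As `f` is invariant under translation by `ω uₙ` for each `ω ∈ 𝓞 K`,
  its derivative satisfies `L (ω uₙ) = o(exp (-n))`. A combination over an integral basis, with
  complex coefficients dual to the matrix `(σ_i(ω_k))`, gives `L (σ_i(uₙ) e_i) = o(exp (-n))`,
  so `L e_i = 0` (`OT_fderiv_single`).
-/


open NumberField

noncomputable section

variable (K : Type) [Field K] [NumberField K] (U : Subgroup (𝓞 K)ˣ)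
variable (s t : ℕ) (σ : Fin (s + 2 * t) → (K →+* ℂ))

/-- The logarithm map `ℓ : U → ℝˢ`, `ℓ(u) = (log σ₁(u), …, log σ_s(u))`. -/
def ell : ↥U → (Fin s → ℝ) := fun u i =>
  Real.log ((σ (Fin.castLE (by omega) i) (algebraMap (𝓞 K) K ((u : (𝓞 K)ˣ) : 𝓞 K))).re)

/-- The value `σ_i(u)` of the `i`-th embedding at a unit `u ∈ U`. -/
def embVal (u : ↥U) (i : Fin (s + 2 * t)) : ℂ :=
  σ i (algebraMap (𝓞 K) K ((u : (𝓞 K)ˣ) : 𝓞 K))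

/-- The universal cover `D = Hˢ × ℂᵗ ⊆ ℂ^{s+t}` of the Oeljeklaus–Toma manifold. -/
def OTdomain : Set (Fin (s + t) → ℂ) := {z | ∀ i : Fin (s + t), (i : ℕ) < s → 0 < (z i).im}

/-- The affine action of `(a, b) ∈ Γ(K,U) = U ⋉ 𝒪_K` on `D`:
`(a,b)·z = (σ₁(a)z₁+σ₁(b), …, σ_{s+t}(a)z_{s+t}+σ_{s+t}(b))`. -/
def OTact (a : (𝓞 K)ˣ) (b : 𝓞 K) (z : Fin (s + t) → ℂ) : Fin (s + t) → ℂ := fun i =>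
  σ (Fin.castLE (by omega) i) (algebraMap (𝓞 K) K (a : 𝓞 K)) * z i +
    σ (Fin.castLE (by omega) i) (algebraMap (𝓞 K) K b)

open Filter Asymptotics Topology

lemma OT_le (s t : ℕ) : s + t ≤ s + 2 * t :=
  Nat.add_le_add_left (Nat.le_mul_of_pos_left t two_pos) s

lemma OT_le' (s t : ℕ) : s ≤ s + 2 * t := Nat.le_add_right s (2 * t)

lemma OT_lt {s t k : ℕ} (hk : k < t) : s + k < s + 2 * t :=
  (Nat.add_lt_add_left hk s).trans_le (OT_le s t)

lemma OT_lt' {s t k : ℕ} (hk : k < t) : s + t + k < s + 2 * t :=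
  (Nat.add_lt_add_left hk (s + t)).trans_eq ((congrArg (s + ·) (two_mul t)).trans
    (Nat.add_assoc s t t).symm).symm

/-- The embedding `x ↦ (σ₁(x), …, σ_{s+t}(x))` of `K` in `ℂ^{s+t}`. -/
def OTtrans (x : K) : Fin (s + t) → ℂ := fun i => σ (Fin.castLE (OT_le s t) i) x

/-- The vector `(σ₁(x), …, σ_s(x), 0, …, 0)`, the projection of `x` to `ℝˢ`. -/
def OTreal (x : K) : Fin (s + t) → ℂ := fun i =>
  if (i : ℕ) < s then σ (Fin.castLE (OT_le s t) i) x else 0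

variable {K U s t σ}

/-! ### The lattice of integers -/

lemma sigma_surjective (hdeg : Module.finrank ℚ K = s + 2 * t)
    (hσinj : Function.Injective σ) : Function.Surjective σ := by
  have hcard : Fintype.card (Fin (s + 2 * t)) = Fintype.card (K →+* ℂ) := by
    rw [Fintype.card_fin, NumberField.Embeddings.card, hdeg]
  exact ((Fintype.bijective_iff_injective_and_card σ).2 ⟨hσinj, hcard⟩).2

/-- The columns `(σ_i(ω_k))_i` of the matrix `(σ_i(ω_k))` are linearly independent over `ℂ`. -/
lemma coeff_eq_zero (hdeg : Module.finrank ℚ K = s + 2 * t)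
    (hσinj : Function.Injective σ)
    (c : Module.Free.ChooseBasisIndex ℤ (𝓞 K) → ℂ)
    (hc : ∀ i, ∑ k, c k * σ i (integralBasis K k) = 0) : c = 0 := by
  have hli := (NumberField.canonicalEmbedding.latticeBasis K).linearIndependent
  rw [Fintype.linearIndependent_iff] at hli
  funext k
  refine hli c ?_ k
  funext φ
  obtain ⟨i, rfl⟩ := sigma_surjective hdeg hσinj φ
  simpa [Finset.sum_apply, NumberField.canonicalEmbedding.latticeBasis_apply,
    NumberField.canonicalEmbedding.apply_at] using hc i

/-- Coefficients dual to the matrix `(σ_i(ω_k))`. -/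
lemma exists_dual_coeff (hσinj : Function.Injective σ) (i : Fin (s + 2 * t)) :
    ∃ c : Module.Free.ChooseBasisIndex ℤ (𝓞 K) → ℂ,
      ∀ j, ∑ k, c k * σ j (integralBasis K k) = if j = i then 1 else 0 := by
  classical
  set B := NumberField.canonicalEmbedding.latticeBasis K
  refine ⟨fun k => B.repr (Pi.single (σ i) 1) k, fun j => ?_⟩
  have h := congrFun (B.sum_repr (Pi.single (σ i) 1)) (σ j)
  simp only [Finset.sum_apply, Pi.smul_apply, smul_eq_mul, B,
    NumberField.canonicalEmbedding.latticeBasis_apply,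
    NumberField.canonicalEmbedding.apply_at] at h
  rw [h, Pi.single_apply]
  simp [hσinj.eq_iff]

/-- The image of an integral basis spans `ℝˢ × ℂᵗ` over `ℝ`. -/
lemma exists_real_coords (hdeg : Module.finrank ℚ K = s + 2 * t)
    (hσinj : Function.Injective σ)
    (hreal : ∀ i : Fin (s + 2 * t), (i : ℕ) < s → ∀ x : K, (σ i x).im = 0)
    (hconj : ∀ k : ℕ, ∀ hk : k < t, ∀ x : K,
      σ ⟨s + t + k, OT_lt' hk⟩ x = (starRingEnd ℂ) (σ ⟨s + k, OT_lt hk⟩ x))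
    (v : Fin (s + t) → ℂ) (hv : ∀ i : Fin (s + t), (i : ℕ) < s → (v i).im = 0) :
    ∃ c : Module.Free.ChooseBasisIndex ℤ (𝓞 K) → ℝ,
      v = ∑ k, (c k : ℂ) • OTtrans K s t σ (integralBasis K k) := by
  let T : (Module.Free.ChooseBasisIndex ℤ (𝓞 K) → ℝ) →ₗ[ℝ] (Fin s → ℝ) × (Fin t → ℂ) :=
    { toFun := fun c =>
        (fun i => ∑ k, c k * (σ (Fin.castLE (OT_le' s t) i) (integralBasis K k)).re,
         fun j => ∑ k, (c k : ℂ) * σ ⟨s + j, OT_lt j.2⟩ (integralBasis K k))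
      map_add' := fun c d => by
        ext <;> simp [add_mul, Finset.sum_add_distrib]
      map_smul' := fun r c => by
        ext <;> simp [Finset.mul_sum, mul_assoc] }
  have hre : ∀ i : Fin (s + 2 * t), (i : ℕ) < s → ∀ x : K, σ i x = ((σ i x).re : ℂ) :=
    fun i hi x => Complex.ext (by simp) (by simp [hreal i hi x])
  have hTinj : Function.Injective T := by
    rw [injective_iff_map_eq_zero]
    intro c hc
    have h1 : ∀ i : Fin s,
        ∑ k, c k * (σ (Fin.castLE (OT_le' s t) i) (integralBasis K k)).re = 0 :=
      fun i => congrFun (congrArg Prod.fst hc) i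
    have h2 : ∀ j : Fin t,
        ∑ k, (c k : ℂ) * σ ⟨s + j, OT_lt j.2⟩ (integralBasis K k) = 0 :=
      fun j => congrFun (congrArg Prod.snd hc) j
    have h3 := coeff_eq_zero hdeg hσinj (fun k => (c k : ℂ)) (by
      intro i
      by_cases hi : (i : ℕ) < s
      · have := congrArg (fun r : ℝ => (r : ℂ)) (h1 ⟨i, hi⟩)
        simp only [Complex.ofReal_sum, Complex.ofReal_mul, Complex.ofReal_zero] at this
        rw [← this]
        refine Finset.sum_congr rfl fun k _ => ?_
        rw [hre i hi]
        rfl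
      · by_cases hi' : (i : ℕ) < s + t
        · have := h2 ⟨i - s, by omega⟩
          have e : (⟨s + (i - s), by omega⟩ : Fin (s + 2 * t)) = i := Fin.ext (by simp; omega)
          simpa [e] using this
        · have hk : (i : ℕ) - (s + t) < t := by omega
          have := congrArg (starRingEnd ℂ) (h2 ⟨i - (s + t), hk⟩)
          have e : (⟨s + t + (i - (s + t)), by omega⟩ : Fin (s + 2 * t)) = i :=
            Fin.ext (by simp; omega)
          simp only [map_sum, map_mul, Complex.conj_ofReal, map_zero, ← hconj _ hk, e] at this
          exact this)
    funext k
    exact Complex.ofReal_eq_zero.1 (congrFun h3 k)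
  have hTsurj : Function.Surjective T := by
    refine (LinearMap.injective_iff_surjective_of_finrank_eq_finrank ?_).1 hTinj
    rw [Module.finrank_prod, Module.finrank_fintype_fun_eq_card,
      Module.finrank_fintype_fun_eq_card, Module.finrank_pi_fintype,
      ← Module.finrank_eq_card_chooseBasisIndex, NumberField.RingOfIntegers.rank, hdeg]
    simp [Complex.finrank_real_complex, mul_comm]
  obtain ⟨c, hc⟩ := hTsurj (fun i => (v (Fin.castLE (Nat.le_add_right s t) i)).re,
    fun j => v ⟨s + j, by omega⟩)
  refine ⟨c, ?_⟩
  funext i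
  simp only [Finset.sum_apply, Pi.smul_apply, smul_eq_mul, OTtrans]
  by_cases hi : (i : ℕ) < s
  · have h1 : ∑ k, c k * (σ (Fin.castLE (OT_le' s t) (⟨i, hi⟩ : Fin s)) (integralBasis K k)).re
        = (v i).re := congrFun (congrArg Prod.fst hc) ⟨i, hi⟩
    have h2 : v i = ((v i).re : ℂ) := Complex.ext (by simp) (by simp [hv i hi])
    rw [h2, ← h1]
    push_cast
    refine Finset.sum_congr rfl fun k _ => ?_
    rw [← hre _ (by simpa using hi)]
    rfl
  · have h1 : ∑ k, (c k : ℂ) * σ ⟨s + (i - s), by omega⟩ (integralBasis K k)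
        = v ⟨s + (i - s), by omega⟩ :=
      congrFun (congrArg Prod.snd hc) ⟨i - s, by omega⟩
    have e : (⟨s + (i - s), by omega⟩ : Fin (s + t)) = i := Fin.ext (by simp; omega)
    have e' : (⟨s + (i - s), by omega⟩ : Fin (s + 2 * t)) = Fin.castLE (OT_le s t) i :=
      Fin.ext (by simp; omega)
    rw [e, e'] at h1
    exact h1.symm

/-! ### Units with comparably small real embeddings -/

lemma ell_mul
    (hreal : ∀ i : Fin (s + 2 * t), (i : ℕ) < s → ∀ x : K, (σ i x).im = 0)
    (hUpos : ∀ u ∈ U, ∀ i : Fin (s + 2 * t), (i : ℕ) < s →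
      0 < (σ i (algebraMap (𝓞 K) K (u : (𝓞 K)ˣ))).re) (u v : U) :
    ell K U s t σ (u * v) = ell K U s t σ u + ell K U s t σ v := by
  funext i
  have hi : ((Fin.castLE (OT_le' s t) i : Fin (s + 2 * t)) : ℕ) < s := i.2
  have hu := hUpos u u.2 _ hi
  have hv := hUpos v v.2 _ hi
  simp only [ell, Pi.add_apply]
  rw [← Real.log_mul hu.ne' hv.ne']
  simp [Complex.mul_re, hreal _ hi]

/-- There are units whose real embeddings all have size comparable to `exp (-n)`: rounding the
coordinates of `(-n, …, -n)` with respect to `ℓ(U)` changes the vector by a bounded amount only. -/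
lemma exists_small_units
    (hreal : ∀ i : Fin (s + 2 * t), (i : ℕ) < s → ∀ x : K, (σ i x).im = 0)
    (hUpos : ∀ u ∈ U, ∀ i : Fin (s + 2 * t), (i : ℕ) < s →
      0 < (σ i (algebraMap (𝓞 K) K (u : (𝓞 K)ˣ))).re)
    (hspan : Submodule.span ℝ (Set.range (ell K U s t σ)) = ⊤) :
    ∃ C : ℝ, 0 < C ∧ ∃ u : ℕ → U, ∀ n : ℕ, ∀ i : Fin (s + 2 * t), (i : ℕ) < s →
      ‖σ i (algebraMap (𝓞 K) K ((u n : (𝓞 K)ˣ) : 𝓞 K))‖ ≤ C * Real.exp (-n) ∧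
      Real.exp (-n) ≤ C * ‖σ i (algebraMap (𝓞 K) K ((u n : (𝓞 K)ˣ) : 𝓞 K))‖ := by
  have h1 : (fun _ => 1 : Fin s → ℝ) ∈ Submodule.span ℝ (Set.range (ell K U s t σ)) := by
    rw [hspan]; trivial
  obtain ⟨c, hc⟩ := Finsupp.mem_span_range_iff_exists_finsupp.1 h1
  let E : U →* Multiplicative (Fin s → ℝ) :=
    MonoidHom.mk' (fun u => Multiplicative.ofAdd (ell K U s t σ u))
      (fun u v => by rw [ell_mul hreal hUpos]; rfl)
  let u : ℕ → U := fun n => ∏ w ∈ c.support, w ^ ⌊-(n : ℝ) * c w⌋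
  have hu : ∀ n, ell K U s t σ (u n) =
      ∑ w ∈ c.support, ⌊-(n : ℝ) * c w⌋ • ell K U s t σ w := by
    intro n
    have : E (u n) = ∏ w ∈ c.support, E w ^ ⌊-(n : ℝ) * c w⌋ := by
      simp only [u, map_prod, map_zpow]
    have := congrArg Multiplicative.toAdd this
    rw [toAdd_prod] at this
    simpa [E] using this
  let B : ℝ := ∑ w ∈ c.support, ‖ell K U s t σ w‖
  refine ⟨Real.exp B, Real.exp_pos _, u, fun n i hi => ?_⟩
  have hb : |ell K U s t σ (u n) ⟨i, hi⟩ - (-(n : ℝ))| ≤ B := by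
    have h2 : (-(n : ℝ)) = ∑ w ∈ c.support, (-(n : ℝ) * c w) * ell K U s t σ w ⟨i, hi⟩ := by
      have := congrFun hc ⟨i, hi⟩
      simp only [Finsupp.sum, Finset.sum_apply, Pi.smul_apply, smul_eq_mul] at this
      simp only [mul_assoc]
      rw [← Finset.mul_sum, this, mul_one]
    have h5 : ell K U s t σ (u n) ⟨i, hi⟩ - (-(n : ℝ)) = ∑ w ∈ c.support,
        ((⌊-(n : ℝ) * c w⌋ : ℝ) - -(n : ℝ) * c w) * ell K U s t σ w ⟨i, hi⟩ := by
      simp only [sub_mul, Finset.sum_sub_distrib]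
      rw [← h2, hu]
      simp only [Finset.sum_apply, Pi.smul_apply, ← zsmul_eq_mul]
    rw [h5]
    refine (Finset.abs_sum_le_sum_abs _ _).trans (Finset.sum_le_sum fun w _ => ?_)
    rw [abs_mul]
    have h3 : |(⌊-(n : ℝ) * c w⌋ : ℝ) - -(n : ℝ) * c w| ≤ 1 := by
      rw [abs_le]
      constructor
      · linarith [Int.lt_floor_add_one (-(n : ℝ) * c w)]
      · linarith [Int.floor_le (-(n : ℝ) * c w)]
    have h4 : |ell K U s t σ w ⟨i, hi⟩| ≤ ‖ell K U s t σ w‖ :=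
      norm_le_pi_norm (ell K U s t σ w) ⟨i, hi⟩
    nlinarith [abs_nonneg (ell K U s t σ w ⟨i, hi⟩)]
  have hpos := hUpos (u n) (u n).2 i hi
  have hnorm : ‖σ i (algebraMap (𝓞 K) K ((u n : (𝓞 K)ˣ) : 𝓞 K))‖
      = Real.exp (ell K U s t σ (u n) ⟨i, hi⟩) := by
    have e : ell K U s t σ (u n) ⟨i, hi⟩ =
      Real.log ((σ i (algebraMap (𝓞 K) K ((u n : (𝓞 K)ˣ) : 𝓞 K))).re) := rfl
    rw [e, Real.exp_log hpos, ← Complex.abs_re_eq_norm.2 (hreal i hi _), abs_of_pos hpos]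
  rw [hnorm, ← Real.exp_add, ← Real.exp_add, Real.exp_le_exp, Real.exp_le_exp]
  constructor <;> linarith [abs_le.1 hb]

/-! ### Invariant holomorphic functions are constant -/

lemma isOpen_OTdomain : IsOpen (OTdomain s t) := by
  have : OTdomain s t = ⋂ i : Fin (s + t), {z | (i : ℕ) < s → 0 < (z i).im} := by
    ext z; simp [OTdomain]
  rw [this]
  refine isOpen_iInter_of_finite fun i => ?_
  by_cases hi : (i : ℕ) < s
  · simp only [hi, true_imp_iff]
    exact isOpen_lt continuous_const (by fun_prop)
  · simp [hi]

lemma convex_OTdomain : Convex ℝ (OTdomain s t) := by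
  intro z hz w hw a b ha hb hab i hi
  have h1 := hz i hi
  have h2 := hw i hi
  simp only [Pi.add_apply, Pi.smul_apply, Complex.add_im, Complex.real_smul, Complex.im_ofReal_mul]
  rcases ha.eq_or_lt with rfl | ha
  · have : b = 1 := by linarith
    subst this; simpa using h2
  · have := mul_pos ha h1
    have := mul_nonneg hb h2.le
    linarith

lemma add_mem_OTdomain {z v : Fin (s + t) → ℂ} (hz : z ∈ OTdomain s t)
    (hv : ∀ i : Fin (s + t), (i : ℕ) < s → (v i).im = 0) : z + v ∈ OTdomain s t := by
  intro i hi
  simpa [hv i hi] using hz i hi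

/-- An invariant holomorphic function depends on the first `s` coordinates only: it is bounded
along the other ones because `𝓞 K` is cocompact in `ℝˢ × ℂᵗ`. -/
lemma OT_eq_of_agree (hdeg : Module.finrank ℚ K = s + 2 * t)
    (hσinj : Function.Injective σ)
    (hreal : ∀ i : Fin (s + 2 * t), (i : ℕ) < s → ∀ x : K, (σ i x).im = 0)
    (hconj : ∀ k : ℕ, ∀ hk : k < t, ∀ x : K,
      σ ⟨s + t + k, OT_lt' hk⟩ x = (starRingEnd ℂ) (σ ⟨s + k, OT_lt hk⟩ x))
    (f : (Fin (s + t) → ℂ) → ℂ) (hf : DifferentiableOn ℂ f (OTdomain s t))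
    (hinv : ∀ b : 𝓞 K, ∀ z ∈ OTdomain s t, f (z + OTtrans K s t σ (b : K)) = f z)
    (z : Fin (s + t) → ℂ) (hz : z ∈ OTdomain s t) (v : Fin (s + t) → ℂ)
    (hv : ∀ i : Fin (s + t), (i : ℕ) < s → v i = 0) : f (z + v) = f z := by
  have hmem : ∀ l : ℂ, z + l • v ∈ OTdomain s t := fun l =>
    add_mem_OTdomain hz fun i hi => by simp [hv i hi]
  have hdiff : Differentiable ℂ (fun l : ℂ => f (z + l • v)) := by
    intro l
    have h1 : DifferentiableAt ℂ f (z + l • v) :=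
      hf.differentiableAt (isOpen_OTdomain.mem_nhds (hmem l))
    exact h1.comp (f := fun l : ℂ => z + l • v) l (by fun_prop)
  let P : (Module.Free.ChooseBasisIndex ℤ (𝓞 K) → ℝ) → (Fin (s + t) → ℂ) := fun c =>
    z + ∑ k, (c k : ℂ) • OTtrans K s t σ (integralBasis K k)
  have hPc : Continuous P := by fun_prop
  have hPmem : ∀ c, P c ∈ OTdomain s t := fun c => by
    refine add_mem_OTdomain hz fun i hi => ?_
    simp only [Finset.sum_apply, Pi.smul_apply, smul_eq_mul, OTtrans, Complex.im_sum,
      Complex.im_ofReal_mul]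
    refine Finset.sum_eq_zero fun k _ => ?_
    rw [hreal _ (by simpa using hi), mul_zero]
  have hK : IsCompact (f '' (P '' Set.Icc 0 1)) := by
    refine (isCompact_Icc.image hPc).image_of_continuousOn (hf.continuousOn.mono ?_)
    rintro _ ⟨c, -, rfl⟩
    exact hPmem c
  have hbdd : Bornology.IsBounded (Set.range fun l : ℂ => f (z + l • v)) := by
    refine hK.isBounded.subset ?_
    rintro _ ⟨l, rfl⟩
    obtain ⟨c, hc⟩ := exists_real_coords hdeg hσinj hreal hconj (l • v)
      (fun i hi => by simp [hv i hi])
    refine ⟨P (fun k => Int.fract (c k)),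
      ⟨_, ⟨fun k => Int.fract_nonneg _, fun k => (Int.fract_lt_one _).le⟩, rfl⟩, ?_⟩
    -- adding the integral part of the coordinates, a lattice vector, recovers `z + l • v`
    have h := hinv (∑ k, ⌊c k⌋ • RingOfIntegers.basis K k) _ (hPmem fun k => Int.fract (c k))
    rw [← h]
    simp only [P]
    congr 1
    rw [add_assoc, hc]
    congr 1
    funext i
    simp only [OTtrans, map_sum, Pi.add_apply, Finset.sum_apply, Pi.smul_apply, smul_eq_mul,
      zsmul_eq_mul, map_mul, map_intCast, integralBasis_apply]
    rw [← Finset.sum_add_distrib]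
    refine Finset.sum_congr rfl fun k _ => ?_
    rw [← add_mul]
    congr 1
    exact_mod_cast congrArg (fun r : ℝ => (r : ℂ)) (Int.fract_add_floor (c k))
  simpa using hdiff.apply_eq_apply_of_bounded hbdd 1 0

/-- The derivative of an invariant holomorphic function vanishes in the first `s` coordinate
directions. -/
lemma OT_fderiv_single (hσinj : Function.Injective σ)
    (hreal : ∀ i : Fin (s + 2 * t), (i : ℕ) < s → ∀ x : K, (σ i x).im = 0)
    (hUpos : ∀ u ∈ U, ∀ i : Fin (s + 2 * t), (i : ℕ) < s →
      0 < (σ i (algebraMap (𝓞 K) K (u : (𝓞 K)ˣ))).re)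
    (hspan : Submodule.span ℝ (Set.range (ell K U s t σ)) = ⊤)
    (f : (Fin (s + t) → ℂ) → ℂ) (z : Fin (s + t) → ℂ)
    (L : (Fin (s + t) → ℂ) →L[ℂ] ℂ) (hL : HasFDerivAt f L z)
    (hinv : ∀ b : 𝓞 K, f (z + OTreal K s t σ (b : K)) = f z)
    (i : Fin (s + t)) (hi : (i : ℕ) < s) : L (Pi.single i 1) = 0 := by
  obtain ⟨C, hC, u, hu⟩ := exists_small_units hreal hUpos hspan
  have hexp : Tendsto (fun n : ℕ => Real.exp (-(n : ℝ))) atTop (𝓝 0) :=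
    Real.tendsto_exp_neg_atTop_nhds_zero.comp tendsto_natCast_atTop_atTop
  let y : 𝓞 K → ℕ → (Fin (s + t) → ℂ) := fun b n =>
    OTreal K s t σ ((b * ((u n : (𝓞 K)ˣ) : 𝓞 K) : 𝓞 K) : K)
  have hyO : ∀ b, (y b) =O[atTop] (fun n : ℕ => Real.exp (-(n : ℝ))) := by
    intro b
    rw [isBigO_pi]
    intro j
    by_cases hj : (j : ℕ) < s
    · refine IsBigO.of_bound (‖σ (Fin.castLE (OT_le s t) j) (b : K)‖ * C) (Eventually.of_forall ?_)
      intro n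
      simp only [y, OTreal, if_pos hj, map_mul, norm_mul]
      rw [mul_assoc, Real.norm_of_nonneg (Real.exp_pos _).le]
      exact mul_le_mul_of_nonneg_left (hu n _ (by simpa using hj)).1 (norm_nonneg _)
    · simp only [y, OTreal, if_neg hj]
      exact isBigO_zero _ _
  have hLo : ∀ b, (fun n => L (y b n)) =o[atTop] (fun n : ℕ => Real.exp (-(n : ℝ))) := by
    intro b
    have h0 : Tendsto (y b) atTop (𝓝 0) := (hyO b).trans_tendsto hexp
    have h1 := (hasFDerivAt_iff_isLittleO_nhds_zero.1 hL).comp_tendsto h0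
    have h2 : (fun n => f (z + y b n) - f z - L (y b n)) =o[atTop] (y b) := h1
    have h3 : (fun n => -L (y b n)) =o[atTop] (y b) := by
      refine h2.congr_left fun n => ?_
      rw [show f (z + y b n) = f z from hinv _, sub_self, zero_sub]
    exact (isLittleO_neg_left.1 h3).trans_isBigO (hyO b)
  obtain ⟨c, hc⟩ := exists_dual_coeff (K := K) hσinj (Fin.castLE (OT_le s t) i)
  let x : ℕ → ℂ := fun n =>
    σ (Fin.castLE (OT_le s t) i) (algebraMap (𝓞 K) K ((u n : (𝓞 K)ˣ) : 𝓞 K))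
  have hsum : ∀ n, ∑ k, c k * L (y (RingOfIntegers.basis K k) n)
      = x n * L (Pi.single i 1) := by
    intro n
    have : ∑ k, c k • y (RingOfIntegers.basis K k) n = x n • Pi.single i 1 := by
      funext j
      simp only [Finset.sum_apply, Pi.smul_apply, smul_eq_mul, y, OTreal, Pi.single_apply]
      by_cases hj : (j : ℕ) < s
      · have h := hc (Fin.castLE (OT_le s t) j)
        simp only [if_pos hj, map_mul, ← mul_assoc]
        rw [← Finset.sum_mul]
        simp only [integralBasis_apply] at h
        rw [h]
        by_cases hji : j = i
        · subst hji; simp [x]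
        · have : ¬ ((Fin.castLE (OT_le s t) j : Fin (s + 2 * t)) = Fin.castLE (OT_le s t) i) := by
            simpa using hji
          simp [hji]
      · have hji : j ≠ i := by rintro rfl; exact hj hi
        simp [hj, hji]
    have h := congrArg L this
    simpa [map_sum] using h
  have ho : (fun n => x n * L (Pi.single i 1)) =o[atTop] x := by
    have h1 : (fun n => x n * L (Pi.single i 1)) =o[atTop]
        (fun n : ℕ => Real.exp (-(n : ℝ))) := by
      simp only [← hsum]
      exact IsLittleO.fun_sum fun k _ =>
        (hLo (RingOfIntegers.basis K k)).const_mul_left (c k)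
    refine h1.trans_isBigO (IsBigO.of_bound C (Eventually.of_forall fun n => ?_))
    rw [Real.norm_of_nonneg (Real.exp_pos _).le]
    exact (hu n _ (by simpa using hi)).2
  by_contra hne
  have hpos := norm_pos_iff.2 hne
  obtain ⟨n, hn⟩ := (ho.def (half_pos hpos)).exists
  have hxn : 0 < ‖x n‖ := by
    have := (hu n (Fin.castLE (OT_le s t) i) (by simpa using hi)).2
    have h3 := (Real.exp_pos (-(n : ℝ))).trans_le this
    exact pos_of_mul_pos_right h3 hC.le
  rw [norm_mul] at hn
  nlinarith [mul_pos hxn hpos]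

/-- A holomorphic function on `D` that is invariant under translation by `𝓞 K` is constant. -/
lemma OT_const (hdeg : Module.finrank ℚ K = s + 2 * t)
    (hσinj : Function.Injective σ)
    (hreal : ∀ i : Fin (s + 2 * t), (i : ℕ) < s → ∀ x : K, (σ i x).im = 0)
    (hconj : ∀ k : ℕ, ∀ hk : k < t, ∀ x : K,
      σ ⟨s + t + k, OT_lt' hk⟩ x = (starRingEnd ℂ) (σ ⟨s + k, OT_lt hk⟩ x))
    (hUpos : ∀ u ∈ U, ∀ i : Fin (s + 2 * t), (i : ℕ) < s →
      0 < (σ i (algebraMap (𝓞 K) K (u : (𝓞 K)ˣ))).re)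
    (hspan : Submodule.span ℝ (Set.range (ell K U s t σ)) = ⊤)
    (f : (Fin (s + t) → ℂ) → ℂ) (hf : DifferentiableOn ℂ f (OTdomain s t))
    (hinv : ∀ b : 𝓞 K, ∀ z ∈ OTdomain s t, f (z + OTtrans K s t σ (b : K)) = f z)
    (z w : Fin (s + t) → ℂ) (hz : z ∈ OTdomain s t) (hw : w ∈ OTdomain s t) : f z = f w := by
  have hagree := OT_eq_of_agree hdeg hσinj hreal hconj f hf hinv
  refine isOpen_OTdomain.is_const_of_fderiv_eq_zero (𝕜 := ℂ)
    convex_OTdomain.isPreconnected hf ?_ hz hw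
  intro z hz
  have hL := (hf.differentiableAt (isOpen_OTdomain.mem_nhds hz)).hasFDerivAt
  have hinv' : ∀ b : 𝓞 K, f (z + OTreal K s t σ (b : K)) = f z := by
    intro b
    have hmem : z + OTreal K s t σ (b : K) ∈ OTdomain s t := by
      refine add_mem_OTdomain hz fun i hi => ?_
      simp only [OTreal, if_pos hi]
      exact hreal _ (by simpa using hi) _
    rw [← hinv b z hz, ← hagree _ hmem (OTtrans K s t σ (b : K) - OTreal K s t σ (b : K))
      (fun i hi => by simp [OTtrans, OTreal, hi])]
    congr 1
    abel
  have hbasis : ∀ i, fderiv ℂ f z (Pi.single i 1) = 0 := by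
    intro i
    by_cases hi : (i : ℕ) < s
    · exact OT_fderiv_single hσinj hreal hUpos hspan f z _ hL hinv' i hi
    · have h1 : HasDerivAt (fun l : ℂ => f (z + l • Pi.single i 1))
          (fderiv ℂ f z (Pi.single i 1)) 0 := hL.hasLineDerivAt (Pi.single i 1)
      have h2 : (fun l : ℂ => f (z + l • Pi.single i 1)) = fun _ => f z := by
        funext l
        refine hagree z hz _ fun j hj => ?_
        have : j ≠ i := by rintro rfl; exact hi hj
        simp [this]
      rw [h2] at h1
      exact h1.unique (hasDerivAt_const _ _)
  refine ContinuousLinearMap.coe_injective (LinearMap.pi_ext' fun i => LinearMap.ext_ring ?_)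
  simpa using hbasis i

variable (K U s t σ)

/--
**Theorem 1.3, case `q = 0`:** `H^{p,0}(X(K,U), E_ρ) ≠ 0` (there is a family `(f_M)` of
holomorphic functions on `D`, not all identically zero, with
`f_M((a,b)·z) · ∏_{m∈M} σ_m(a) = ρ(a) · f_M(z)`) if and only if `ρ` equals the product of `p`
of the embeddings restricted to `U`. -/
theorem OT_Hp0_nonvanishing_iff
    (hs : 0 < s) (ht : 0 < t)
    (hdeg : Module.finrank ℚ K = s + 2 * t)
    (hσinj : Function.Injective σ)
    (hreal : ∀ i : Fin (s + 2 * t), (i : ℕ) < s → ∀ x : K, (σ i x).im = 0)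
    (hnonreal : ∀ i : Fin (s + 2 * t), s ≤ (i : ℕ) → ∃ x : K, (σ i x).im ≠ 0)
    (hconj : ∀ k : ℕ, ∀ hk : k < t, ∀ x : K,
      σ ⟨s + t + k, by omega⟩ x = (starRingEnd ℂ) (σ ⟨s + k, by omega⟩ x))
    (hUpos : ∀ u ∈ U, ∀ i : Fin (s + 2 * t), (i : ℕ) < s →
      0 < (σ i (algebraMap (𝓞 K) K (u : (𝓞 K)ˣ))).re)
    (hellinj : Function.Injective (ell K U s t σ))
    (hdisc : DiscreteTopology (AddSubgroup.closure (Set.range (ell K U s t σ))))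
    (hspan : Submodule.span ℝ (Set.range (ell K U s t σ)) = ⊤)
    (ρ : ↥U →* ℂˣ) (p : ℕ) :
    (∃ f : {M : Finset (Fin (s + t)) // M.card = p} → ((Fin (s + t) → ℂ) → ℂ),
      (∀ M, DifferentiableOn ℂ (f M) (OTdomain s t)) ∧
      (∀ M, ∀ (a : ↥U) (b : 𝓞 K), ∀ z ∈ OTdomain s t,
        f M (OTact K s t σ (a : (𝓞 K)ˣ) b z) *
            ∏ m ∈ M.1, embVal K U s t σ a (Fin.castLE (by omega) m) =
          (ρ a : ℂ) * f M z) ∧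
      (∃ M, ∃ z ∈ OTdomain s t, f M z ≠ 0)) ↔
    (∃ M : Finset (Fin (s + t)), M.card = p ∧
      ∀ u : ↥U, (ρ u : ℂ) = ∏ m ∈ M, embVal K U s t σ u (Fin.castLE (by omega) m)) := by
  constructor
  · rintro ⟨f, hf, htr, M, z, hz, hne⟩
    refine ⟨M.1, M.2, fun a => ?_⟩
    have hinv : ∀ b : 𝓞 K, ∀ z ∈ OTdomain s t, f M (z + OTtrans K s t σ (b : K)) = f M z := by
      intro b z hz
      have h := htr M 1 b z hz
      have e : OTact K s t σ ((1 : ↥U) : (𝓞 K)ˣ) b z = z + OTtrans K s t σ (b : K) := by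
        funext i
        simp [OTact, OTtrans]
      rw [e] at h
      simpa [embVal] using h
    have hmem : OTact K s t σ (a : (𝓞 K)ˣ) 0 z ∈ OTdomain s t := by
      intro i hi
      have hi' : ((Fin.castLE (OT_le s t) i : Fin (s + 2 * t)) : ℕ) < s := hi
      simp only [OTact, map_zero, add_zero, Complex.mul_im, hreal _ hi', zero_mul]
      exact mul_pos (hUpos a a.2 _ hi') (hz i hi)
    have h := htr M a 0 z hz
    rw [OT_const hdeg hσinj hreal hconj hUpos hspan (f M) (hf M) hinv _ z hmem hz,
      mul_comm] at h
    exact (mul_right_cancel₀ hne h).symm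
  · rintro ⟨M, hM, hρ⟩
    classical
    refine ⟨fun N _ => if N.1 = M then 1 else 0, fun N => differentiableOn_const _, ?_,
      ⟨M, hM⟩, fun _ => Complex.I, fun i _ => by simp, by simp⟩
    intro N a b z _
    by_cases hN : N.1 = M
    · simp [hN, hρ]
    · simp [hN]

end
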